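/- Let p_1 < p_2 < ... denote the sequence of all primes and let k ≥ 0 be an integer. Then the limit as N → ∞ of ( ∑_{i=1}^N φ(φ(p_i^{k+1})) ) / ( ∑_{i=1}^N φ(p_i^{k+1}) ) exists and equals Artin's constant A = ∏_p (1 − 1/(p(p−1))). -/

import Mathlib

open Filter

/-- Artin's constant `A = ∏_p (1 - 1/(p(p-1)))`, product over all primes. -/
noncomputable def artinConstant : ℝ :=
  ∏' p : Nat.Primes, (1 - 1 / (((p : ℕ) : ℝ) * (((p : ℕ) : ℝ) - 1)))

/-!
Smoothing with the Fejér kernel and the Riemann–Lebesgue lemma give the Wiener–Ikehara theorem,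
hence the prime number theorem in arithmetic progressions: for fixed `d`, the primes `p` with
`d ∣ p - 1` have density `1 / φ(d)`. Expanding the product over primes `q ≤ y` of the local factors
of `φ(p - 1) / (p - 1)` therefore shows that its mean value over the primes is
`∏_{q ≤ y} (1 - 1 / (q (q - 1)))`. A Brun–Titchmarsh type bound makes the contribution of `q > y`
tend to `0` uniformly as `y → ∞`, so `φ(p - 1) / (p - 1)` has mean value `A`.

At a prime `p`, the ratio `φ(φ(p ^ (k + 1))) / φ(p ^ (k + 1))` differs from `φ(p - 1) / (p - 1)` by
at most `1 / p`, so it has the same mean value. Since `φ(p ^ (k + 1))` is `log p` times a monotone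
weight of doubling growth, summation by parts carries the mean value over to these weights.
-/

/-! ### The triangle function and the Fejér kernel -/

section

open MeasureTheory Set
open scoped Topology

/-- The triangle function `1 - |t| / L` on `[-L, L]`, extended by zero. -/
noncomputable def triangle (L t : ℝ) : ℝ :=
  max (1 - |t| / L) 0

namespace triangle

variable {L : ℝ}

lemma nonneg (L t : ℝ) : 0 ≤ triangle L t := le_max_right _ _

lemma eq_of_abs_le {t : ℝ} (hL : 0 < L) (ht : |t| ≤ L) : triangle L t = 1 - |t| / L :=
  max_eq_left (sub_nonneg.2 ((div_le_one hL).2 ht))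

lemma eq_zero_of_le_abs {t : ℝ} (hL : 0 < L) (ht : L ≤ |t|) : triangle L t = 0 :=
  max_eq_right (sub_nonpos.2 ((one_le_div hL).2 ht))

@[fun_prop]
lemma continuous : Continuous (triangle L) := by
  unfold triangle
  fun_prop

lemma integrable (hL : 0 < L) : Integrable (triangle L) :=
  continuous.integrable_of_hasCompactSupport <|
    HasCompactSupport.intro isCompact_Icc fun _ ht ↦
      eq_zero_of_le_abs hL (not_le.1 (mt abs_le.1 ht)).le

end triangle

/-- The Fejér kernel `2 (1 - cos (L u)) / (L u ^ 2)` on the real line, written with `sinc` so that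
it is continuous at `u = 0`. It is the Fourier transform of `triangle L`. -/
noncomputable def fejerKernel (L u : ℝ) : ℝ :=
  L * Real.sinc (L * u / 2) ^ 2

namespace fejerKernel

variable {L : ℝ}

lemma eq_of_ne_zero (L : ℝ) {u : ℝ} (hu : u ≠ 0) :
    fejerKernel L u = 2 * (1 - Real.cos (L * u)) / (L * u ^ 2) := by
  rcases eq_or_ne L 0 with rfl | hL
  · simp [fejerKernel]
  have half_angle : Real.sin (L * u / 2) ^ 2 = (1 - Real.cos (L * u)) / 2 := by
    rw [Real.sin_sq_eq_half_sub, mul_div_cancel₀ _ two_ne_zero]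
    ring
  rw [fejerKernel, Real.sinc_of_ne_zero (by positivity), div_pow, half_angle]
  field_simp

@[fun_prop]
lemma continuous : Continuous (fejerKernel L) := by
  have := Real.continuous_sinc
  unfold fejerKernel
  fun_prop

lemma nonneg (hL : 0 ≤ L) (u : ℝ) : 0 ≤ fejerKernel L u := by
  unfold fejerKernel
  positivity

lemma le_self (hL : 0 ≤ L) (u : ℝ) : fejerKernel L u ≤ L :=
  mul_le_of_le_one_right hL ((sq_le_one_iff_abs_le_one _).2 (Real.abs_sinc_le_one _))

lemma mul_sq_le (hL : 0 < L) (u : ℝ) : fejerKernel L u * u ^ 2 ≤ 4 / L := by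
  rcases eq_or_ne u 0 with rfl | hu
  · simp only [ne_eq, OfNat.ofNat_ne_zero, not_false_eq_true, zero_pow, mul_zero]
    positivity
  rw [eq_of_ne_zero L hu, le_div_iff₀ hL]
  field_simp
  linarith [Real.neg_one_le_cos (L * u)]

lemma le_mul_inv_one_add_sq (hL : 0 < L) (u : ℝ) :
    fejerKernel L u ≤ (L + 4 / L) * (1 + u ^ 2)⁻¹ := by
  rw [← div_eq_mul_inv, le_div_iff₀ (by positivity)]
  linarith [le_self hL.le u, mul_sq_le hL u]

lemma integrable (hL : 0 < L) : Integrable (fejerKernel L) := by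
  refine (integrable_inv_one_add_sq.const_mul (L + 4 / L)).mono'
    continuous.aestronglyMeasurable (ae_of_all _ fun u ↦ ?_)
  rw [Real.norm_of_nonneg (nonneg hL.le u)]
  exact le_mul_inv_one_add_sq hL u

lemma integral_one_sub_div_mul_cos (hL : 0 < L) (u : ℝ) :
    ∫ t in (0 : ℝ)..L, (1 - t / L) * Real.cos (t * u) = fejerKernel L u / 2 := by
  rcases eq_or_ne u 0 with rfl | hu
  · simp [fejerKernel, intervalIntegral.integral_sub, intervalIntegral.integral_div]
    field_simp
    norm_num
  have antideriv (t : ℝ) : HasDerivAt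
      (fun t ↦ (1 - t / L) * (Real.sin (t * u) / u) - Real.cos (t * u) / (L * u ^ 2))
      ((1 - t / L) * Real.cos (t * u)) t := by
    have mul_u : HasDerivAt (fun t ↦ t * u) u t := hasDerivAt_mul_const u
    convert! ((((hasDerivAt_id t).div_const L).const_sub 1).mul (mul_u.sin.div_const u)).sub
      (mul_u.cos.div_const (L * u ^ 2)) using 1
    simp only [id]
    field_simp
    ring
  rw [intervalIntegral.integral_eq_sub_of_hasDerivAt (fun t _ ↦ antideriv t)
    (Continuous.intervalIntegrable (by fun_prop) _ _), eq_of_ne_zero L hu]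
  simp only [div_self hL.ne', zero_mul, Real.sin_zero, Real.cos_zero]
  field_simp
  ring

lemma integral_triangle_mul_exp (hL : 0 < L) (u : ℝ) :
    ∫ t, (triangle L t : ℂ) * Complex.exp (t * u * Complex.I) = fejerKernel L u := by
  set f : ℝ → ℂ := fun t ↦ triangle L t * Complex.exp (t * u * Complex.I) with f_def
  have cont : Continuous f := by fun_prop
  have cont_neg : Continuous fun t ↦ f (-t) := cont.comp continuous_neg
  have support : ∀ t ∉ Ioc (-L) L, f t = 0 := by
    intro t ht
    have : L ≤ |t| := le_of_not_gt fun h ↦ ht ⟨(abs_lt.1 h).1, (abs_lt.1 h).2.le⟩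
    simp [f_def, triangle.eq_zero_of_le_abs hL this]
  have fold : ∀ t ∈ uIcc 0 L,
      f (-t) + f t = ((2 * ((1 - t / L) * Real.cos (t * u)) : ℝ) : ℂ) := by
    intro t ht
    rw [uIcc_of_le hL.le] at ht
    have abs_t : |t| = t := abs_of_nonneg ht.1
    simp only [f_def, triangle.eq_of_abs_le hL (abs_t.trans_le ht.2),
      triangle.eq_of_abs_le hL ((abs_neg t).trans_le (abs_t.trans_le ht.2)), abs_neg, abs_t]
    push_cast
    rw [Complex.cos]
    ring_nf
  calc ∫ t, f t = ∫ t in (-L)..L, f t := by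
        rw [intervalIntegral.integral_of_le (by linarith),
          setIntegral_eq_integral_of_forall_compl_eq_zero support]
    _ = (∫ t in (0 : ℝ)..L, f (-t)) + ∫ t in (0 : ℝ)..L, f t := by
        rw [intervalIntegral.integral_comp_neg, neg_zero,
          intervalIntegral.integral_add_adjacent_intervals] <;>
        exact cont.intervalIntegrable _ _
    _ = fejerKernel L u := by
        rw [← intervalIntegral.integral_add (cont_neg.intervalIntegrable _ _)
          (cont.intervalIntegrable _ _), intervalIntegral.integral_congr fold,
          intervalIntegral.integral_ofReal, intervalIntegral.integral_const_mul,
          integral_one_sub_div_mul_cos hL, mul_div_cancel₀ _ two_ne_zero]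

lemma mul_le_of_abs_le_inv (hL : 0 < L) {u : ℝ} (hu : |u| ≤ L⁻¹) :
    4 / Real.pi ^ 2 * L ≤ fejerKernel L u := by
  rcases eq_or_ne u 0 with rfl | hu₀
  · simp only [fejerKernel, mul_zero, zero_div, Real.sinc_zero, one_pow, mul_one]
    exact mul_le_of_le_one_left hL.le ((div_le_one (by positivity)).2 (by
      nlinarith [Real.pi_gt_three]))
  have hLu : |L * u| ≤ Real.pi := by
    rw [abs_mul, abs_of_pos hL]
    linarith [(le_inv_mul_iff₀ hL).1 (hu.trans_eq (mul_one _).symm), Real.pi_gt_three]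
  rw [eq_of_ne_zero L hu₀, le_div_iff₀ (by positivity)]
  calc 4 / Real.pi ^ 2 * L * (L * u ^ 2) = 2 * (2 / Real.pi ^ 2 * (L * u) ^ 2) := by ring
    _ ≤ 2 * (1 - Real.cos (L * u)) := by linarith [Real.cos_le_one_sub_mul_cos_sq hLu]

lemma le_setIntegral_Icc {η : ℝ} (hL : 0 < L) (hη : L⁻¹ ≤ η) :
    8 / Real.pi ^ 2 ≤ ∫ u in Icc (-η) η, fejerKernel L u := by
  calc 8 / Real.pi ^ 2 = ∫ _ in Icc (-L⁻¹) L⁻¹, 4 / Real.pi ^ 2 * L := by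
        have : 0 ≤ L⁻¹ + L⁻¹ := by positivity
        simp only [setIntegral_const, Real.volume_real_Icc, sub_neg_eq_add, max_eq_left this,
          smul_eq_mul]
        field_simp
        norm_num
    _ ≤ ∫ u in Icc (-L⁻¹) L⁻¹, fejerKernel L u :=
        setIntegral_mono_on (integrableOn_const (by simp)) (integrable hL).integrableOn
          measurableSet_Icc fun u hu ↦ mul_le_of_abs_le_inv hL (abs_le.2 hu)
    _ ≤ ∫ u in Icc (-η) η, fejerKernel L u :=
        setIntegral_mono_set (integrable hL).integrableOn (ae_of_all _ (nonneg hL.le))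
          (Icc_subset_Icc (neg_le_neg hη) hη).eventuallyLE

lemma le_mul_inv_one_add_sq_of_le_abs {η u : ℝ} (hL : 0 < L) (hη : 0 < η) (hu : η ≤ |u|) :
    fejerKernel L u ≤ 4 / L * (1 + 1 / η ^ 2) * (1 + u ^ 2)⁻¹ := by
  have sq_le : η ^ 2 ≤ u ^ 2 := sq_le_sq.2 ((abs_of_pos hη).trans_le hu)
  have hu_pos : 0 < u ^ 2 := (by positivity : 0 < η ^ 2).trans_le sq_le
  have one_le : 1 ≤ u ^ 2 * (1 / η ^ 2) := by
    rwa [mul_one_div, one_le_div (by positivity)]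
  calc fejerKernel L u ≤ 4 / L * (u ^ 2)⁻¹ := by
        rw [← div_eq_mul_inv, le_div_iff₀ hu_pos]
        exact mul_sq_le hL u
    _ ≤ 4 / L * ((1 + 1 / η ^ 2) * (1 + u ^ 2)⁻¹) := by
        gcongr
        rw [← div_eq_mul_inv, le_div_iff₀ (by positivity), inv_mul_le_iff₀ hu_pos]
        linarith
    _ = 4 / L * (1 + 1 / η ^ 2) * (1 + u ^ 2)⁻¹ := (mul_assoc _ _ _).symm

lemma tendsto_setIntegral_compl_Icc {η : ℝ} (hη : 0 < η) :
    Tendsto (fun L ↦ ∫ u in (Icc (-η) η)ᶜ, fejerKernel L u) atTop (𝓝 0) := by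
  have bound : ∀ L > 0, ∫ u in (Icc (-η) η)ᶜ, fejerKernel L u ≤
      4 / L * (1 + 1 / η ^ 2) * Real.pi := by
    intro L hL
    have majorant := integrable_inv_one_add_sq.const_mul (4 / L * (1 + 1 / η ^ 2))
    calc ∫ u in (Icc (-η) η)ᶜ, fejerKernel L u
        ≤ ∫ u in (Icc (-η) η)ᶜ, 4 / L * (1 + 1 / η ^ 2) * (1 + u ^ 2)⁻¹ :=
          setIntegral_mono_on (integrable hL).integrableOn majorant.integrableOn
            measurableSet_Icc.compl fun u hu ↦
              le_mul_inv_one_add_sq_of_le_abs hL hη (not_le.1 (mt abs_le.1 hu)).le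
      _ ≤ ∫ u, 4 / L * (1 + 1 / η ^ 2) * (1 + u ^ 2)⁻¹ :=
          setIntegral_le_integral majorant (ae_of_all _ fun u ↦ by positivity)
      _ = 4 / L * (1 + 1 / η ^ 2) * Real.pi := by
          rw [integral_const_mul, integral_univ_inv_one_add_sq]
  refine squeeze_zero'
    ((eventually_ge_atTop 0).mono fun L hL ↦ integral_nonneg (nonneg hL))
    ((eventually_gt_atTop 0).mono bound) ?_
  simpa using ((tendsto_const_nhds.div_atTop tendsto_id).mul_const _).mul_const Real.pi

end fejerKernel
end

/-! ### A Tauberian theorem for the Laplace transform -/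

section

open MeasureTheory Set
open scoped Topology

/-- The Laplace transform `∫₀^∞ D(v) e^(-z v) dv`. -/
noncomputable def laplaceTransform (D : ℝ → ℝ) (z : ℂ) : ℂ :=
  ∫ v in Ioi (0 : ℝ), (D v : ℂ) * Complex.exp (-z * v)

section Smoothing

variable {D : ℝ → ℝ} {C L : ℝ} {H : ℂ → ℂ}

lemma integral_triangle_mul_exp_mul_laplaceTransform (hDm : Measurable D)
    (hD : ∀ v > 0, |D v| ≤ C) (hL : 0 < L) (w : ℝ) {δ : ℝ} (hδ : 0 < δ) :
    ∫ t, (triangle L t : ℂ) * Complex.exp (t * w * Complex.I) *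
        laplaceTransform D (δ + t * Complex.I) =
      ((∫ v in Ioi 0, D v * Real.exp (-δ * v) * fejerKernel L (w - v) : ℝ) : ℂ) := by
  simp_rw [laplaceTransform, ← integral_const_mul]
  rw [integral_integral_swap, ← integral_complex_ofReal]
  · congr 1 with v
    rw [Complex.ofReal_mul, ← fejerKernel.integral_triangle_mul_exp hL, ← integral_const_mul]
    congr 1 with t
    have split_exp : Complex.exp (t * w * Complex.I) * Complex.exp (-(δ + t * Complex.I) * v) =
        Complex.exp (-δ * v) * Complex.exp (t * (w - v : ℝ) * Complex.I) := by
      rw [← Complex.exp_add, ← Complex.exp_add]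
      congr 1
      push_cast
      ring
    push_cast at split_exp ⊢
    linear_combination (triangle L t : ℂ) * D v * split_exp
  · refine ((triangle.integrable hL).mul_prod
      ((integrableOn_exp_mul_Ioi (neg_lt_zero.2 hδ) 0).const_mul C)).mono'
      (Measurable.aestronglyMeasurable (by
        have := (triangle.continuous (L := L)).measurable
        simp only [Function.uncurry_def]
        fun_prop)) ?_
    have hsnd : ∀ᵐ p ∂(volume : Measure ℝ).prod (volume.restrict (Ioi (0 : ℝ))), p.2 ∈ Ioi 0 :=
      Measure.quasiMeasurePreserving_snd.ae (ae_restrict_mem measurableSet_Ioi)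
    filter_upwards [hsnd] with p hp
    have norm_exp : ‖Complex.exp (-(δ + p.1 * Complex.I) * p.2)‖ = Real.exp (-δ * p.2) := by
      simp [Complex.norm_exp]
    have norm_exp_I : ‖Complex.exp (p.1 * w * Complex.I)‖ = 1 := by
      simp [Complex.norm_exp]
    simp only [Function.uncurry, norm_mul, norm_exp, norm_exp_I, Complex.norm_real, mul_one,
      Real.norm_of_nonneg (triangle.nonneg L _), Real.norm_eq_abs]
    exact mul_le_mul_of_nonneg_left (mul_le_mul_of_nonneg_right (hD _ hp) (Real.exp_pos _).le)
      (triangle.nonneg L _)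

lemma tendsto_integral_triangle_mul_exp_mul (hH : ContinuousOn H {z | 0 ≤ z.re}) (hL : 0 < L)
    (w : ℝ) :
    Tendsto (fun δ : ℝ ↦ ∫ t, (triangle L t : ℂ) * Complex.exp (t * w * Complex.I) *
        H (δ + t * Complex.I)) (𝓝[>] 0)
      (𝓝 (∫ t, (triangle L t : ℂ) * Complex.exp (t * w * Complex.I) * H (t * Complex.I))) := by
  have mem_Ioc : ∀ᶠ δ : ℝ in 𝓝[>] 0, δ ∈ Ioc (0 : ℝ) 1 := Ioc_mem_nhdsGT one_pos
  obtain ⟨M, hM⟩ : ∃ M, ∀ p ∈ Icc (0 : ℝ) 1 ×ˢ Icc (-L) L, ‖H (p.1 + p.2 * Complex.I)‖ ≤ M :=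
    (isCompact_Icc.prod isCompact_Icc).exists_bound_of_continuousOn
      (hH.comp (by fun_prop) fun p hp ↦ by simpa using hp.1.1)
  refine tendsto_integral_filter_of_dominated_convergence (fun t ↦ triangle L t * M) ?_ ?_
    ((triangle.integrable hL).mul_const M) (ae_of_all _ fun t ↦ ?_)
  · filter_upwards [mem_Ioc] with δ hδ
    have : Continuous fun t : ℝ ↦ H (δ + t * Complex.I) :=
      hH.comp_continuous (by fun_prop) fun t ↦ by simpa using hδ.1.le
    have _ := triangle.continuous (L := L)
    exact (Continuous.mul (by fun_prop) this).aestronglyMeasurable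
  · filter_upwards [mem_Ioc] with δ hδ
    refine ae_of_all _ fun t ↦ ?_
    rcases le_total L |t| with ht | ht
    · simp [triangle.eq_zero_of_le_abs hL ht]
    · have norm_exp : ‖Complex.exp (t * w * Complex.I)‖ = 1 := by simp [Complex.norm_exp]
      rw [norm_mul, norm_mul, norm_exp, mul_one, Complex.norm_real,
        Real.norm_of_nonneg (triangle.nonneg L t)]
      exact mul_le_mul_of_nonneg_left (hM (δ, t) ⟨Ioc_subset_Icc_self hδ, abs_le.1 ht⟩)
        (triangle.nonneg L t)
  · refine Tendsto.const_mul _ ((hH (t * Complex.I) (by simp)).tendsto.comp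
      (tendsto_nhdsWithin_iff.2 ⟨?_, mem_Ioc.mono fun δ hδ ↦ by simpa using hδ.1.le⟩))
    have : Continuous fun δ : ℝ ↦ (δ + t * Complex.I : ℂ) := by fun_prop
    simpa using (this.tendsto 0).mono_left nhdsWithin_le_nhds

lemma tendsto_integral_mul_exp_mul_fejerKernel (hDm : Measurable D) (hD : ∀ v > 0, |D v| ≤ C)
    (hL : 0 < L) (w : ℝ) :
    Tendsto (fun δ ↦ ∫ v in Ioi 0, D v * Real.exp (-δ * v) * fejerKernel L (w - v)) (𝓝[>] 0)
      (𝓝 (∫ v in Ioi 0, D v * fejerKernel L (w - v))) := by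
  have K_measurable := (fejerKernel.continuous (L := L)).measurable
  refine tendsto_integral_filter_of_dominated_convergence (fun v ↦ C * fejerKernel L (w - v))
    (.of_forall fun δ ↦ Measurable.aestronglyMeasurable (by fun_prop)) ?_
    (((fejerKernel.integrable hL).comp_sub_left w).const_mul C).integrableOn
    (ae_of_all _ fun v ↦ ?_)
  · filter_upwards [self_mem_nhdsWithin] with δ hδ
    filter_upwards [ae_restrict_mem measurableSet_Ioi] with v hv
    have exp_le_one : Real.exp (-δ * v) ≤ 1 :=
      Real.exp_le_one_iff.2 (by nlinarith [mul_pos (mem_Ioi.1 hδ) (mem_Ioi.1 hv)])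
    rw [norm_mul, norm_mul, Real.norm_of_nonneg (fejerKernel.nonneg hL.le _),
      Real.norm_of_nonneg (Real.exp_pos _).le, Real.norm_eq_abs]
    exact mul_le_mul_of_nonneg_right
      ((mul_le_of_le_one_right (abs_nonneg _) exp_le_one).trans (hD v hv))
      (fejerKernel.nonneg hL.le _)
  · have : Continuous fun δ : ℝ ↦ D v * Real.exp (-δ * v) * fejerKernel L (w - v) := by fun_prop
    simpa using (this.tendsto 0).mono_left nhdsWithin_le_nhds

/-- The boundary values of the Laplace transform enter only through their integrals against the
compactly supported `triangle L`, which is why mere continuity up to the boundary suffices. -/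
lemma integral_triangle_mul_exp_mul_boundary (hDm : Measurable D) (hD : ∀ v > 0, |D v| ≤ C)
    (hH : ContinuousOn H {z | 0 ≤ z.re}) (hDH : EqOn (laplaceTransform D) H {z | 0 < z.re})
    (hL : 0 < L) (w : ℝ) :
    ∫ t, (triangle L t : ℂ) * Complex.exp (t * w * Complex.I) * H (t * Complex.I) =
      ((∫ v in Ioi 0, D v * fejerKernel L (w - v) : ℝ) : ℂ) := by
  refine tendsto_nhds_unique (tendsto_integral_triangle_mul_exp_mul hH hL w)
    (((Complex.continuous_ofReal.tendsto _).comp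
      (tendsto_integral_mul_exp_mul_fejerKernel hDm hD hL w)).congr' ?_)
  filter_upwards [self_mem_nhdsWithin] with δ hδ
  simp only [Function.comp_apply,
    ← integral_triangle_mul_exp_mul_laplaceTransform hDm hD hL w (mem_Ioi.1 hδ)]
  congr 1 with t
  rw [hDH (by simpa using hδ)]

lemma tendsto_integral_mul_fejerKernel (hDm : Measurable D) (hD : ∀ v > 0, |D v| ≤ C)
    (hH : ContinuousOn H {z | 0 ≤ z.re}) (hDH : EqOn (laplaceTransform D) H {z | 0 < z.re})
    (hL : 0 < L) :
    Tendsto (fun w ↦ ∫ v in Ioi 0, D v * fejerKernel L (w - v)) atTop (𝓝 0) := by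
  have frequency : Tendsto (fun w : ℝ ↦ -(w / (2 * Real.pi))) atTop (cocompact ℝ) :=
    (tendsto_neg_atTop_atBot.comp (tendsto_id.atTop_div_const (by positivity))).mono_right
      atBot_le_cocompact
  have riemann_lebesgue := (Complex.continuous_re.tendsto _).comp
    ((Real.tendsto_integral_exp_smul_cocompact
      fun t ↦ (triangle L t : ℂ) * H (t * Complex.I)).comp frequency)
  refine riemann_lebesgue.congr fun w ↦ ?_
  rw [← Complex.ofReal_re (∫ v in Ioi 0, _),
    ← integral_triangle_mul_exp_mul_boundary hDm hD hH hDH hL]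
  simp only [Function.comp_apply, Circle.smul_def, Real.fourierChar_apply, smul_eq_mul]
  congr 2 with t
  have phase : 2 * Real.pi * -(t * -(w / (2 * Real.pi))) = t * w := by
    field_simp
  rw [phase, Complex.ofReal_mul]
  ring

end Smoothing

section Windows

variable {f : ℝ → ℝ} {C L : ℝ}

lemma le_integral_mul_fejerKernel (hfm : Measurable f) (hf : ∀ v, |f v| ≤ C) (hL : 0 < L)
    {w η c : ℝ} (hc : ∀ v ∈ Icc (w - η) (w + η), c ≤ f v) :
    c * (∫ u in Icc (-η) η, fejerKernel L u) - C * (∫ u in (Icc (-η) η)ᶜ, fejerKernel L u) ≤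
      ∫ v, f v * fejerKernel L (w - v) := by
  have K_integrable := fejerKernel.integrable hL
  have fK_integrable : Integrable fun u ↦ f (w - u) * fejerKernel L u :=
    K_integrable.bdd_mul (by fun_prop : Measurable _).aestronglyMeasurable
      (ae_of_all _ fun u ↦ hf (w - u))
  have on_window : c * (∫ u in Icc (-η) η, fejerKernel L u) ≤
      ∫ u in Icc (-η) η, f (w - u) * fejerKernel L u := by
    rw [← integral_const_mul]
    refine setIntegral_mono_on (K_integrable.const_mul c).integrableOn
      fK_integrable.integrableOn measurableSet_Icc fun u hu ↦ ?_
    exact mul_le_mul_of_nonneg_right (hc _ ⟨by linarith [hu.2], by linarith [hu.1]⟩)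
      (fejerKernel.nonneg hL.le u)
  have off_window : -C * (∫ u in (Icc (-η) η)ᶜ, fejerKernel L u) ≤
      ∫ u in (Icc (-η) η)ᶜ, f (w - u) * fejerKernel L u := by
    rw [← integral_const_mul]
    exact setIntegral_mono_on (K_integrable.const_mul _).integrableOn
      fK_integrable.integrableOn measurableSet_Icc.compl fun u _ ↦
        mul_le_mul_of_nonneg_right (abs_le.1 (hf _)).1 (fejerKernel.nonneg hL.le u)
  calc _ ≤ ∫ u, f (w - u) * fejerKernel L u := by
        rw [← integral_add_compl measurableSet_Icc fK_integrable]
        linarith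
    _ = ∫ v, f v * fejerKernel L (w - v) := by
        simpa using (integral_sub_left_eq_self (fun u ↦ f (w - u) * fejerKernel L u)
          volume w).symm

lemma eventually_exists_lt_of_tendsto_integral_mul_fejerKernel (hfm : Measurable f)
    (hf : ∀ v, |f v| ≤ C)
    (hlim : ∀ L > 0, Tendsto (fun w ↦ ∫ v, f v * fejerKernel L (w - v)) atTop (𝓝 0))
    {ε η : ℝ} (hε : 0 < ε) (hη : 0 < η) :
    ∀ᶠ w in atTop, ∃ v ∈ Icc (w - η) (w + η), f v < ε := by
  set m := ε * (8 / Real.pi ^ 2)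
  have hm : 0 < m / 2 := by positivity
  have tail_small : ∀ᶠ L in atTop, C * (∫ u in (Icc (-η) η)ᶜ, fejerKernel L u) < m / 2 := by
    have := (fejerKernel.tendsto_setIntegral_compl_Icc hη).const_mul C
    rw [mul_zero] at this
    exact this.eventually_lt_const hm
  obtain ⟨L, hL, hLη, hLC⟩ := ((eventually_gt_atTop (0 : ℝ)).and
    ((tendsto_inv_atTop_zero.eventually_le_const hη).and tail_small)).exists
  filter_upwards [(hlim L hL).eventually_lt_const hm] with w hw
  by_contra! window
  have mass : m ≤ ε * ∫ u in Icc (-η) η, fejerKernel L u :=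
    mul_le_mul_of_nonneg_left (fejerKernel.le_setIntegral_Icc hL hLη) hε.le
  linarith [le_integral_mul_fejerKernel hfm hf hL window]

end Windows

/-- A function is slowly decreasing if it cannot drop by more than `ε` on the intervals of some
fixed positive length `η`, sufficiently far out. -/
def SlowlyDecreasing (D : ℝ → ℝ) : Prop :=
  ∀ ε > 0, ∃ η > 0, ∀ᶠ v in atTop, ∀ v' ∈ Icc v (v + η), D v - ε ≤ D v'

lemma eventually_exists_lt_of_eqOn_laplaceTransform {D : ℝ → ℝ} {C : ℝ} {H : ℂ → ℂ}
    (hDm : Measurable D) (hD : ∀ v > 0, |D v| ≤ C)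
    (hH : ContinuousOn H {z | 0 ≤ z.re}) (hDH : EqOn (laplaceTransform D) H {z | 0 < z.re})
    {ε η : ℝ} (hε : 0 < ε) (hη : 0 < η) :
    ∀ᶠ w in atTop, ∃ v ∈ Icc (w - η) (w + η), D v < ε := by
  have bounded (v : ℝ) : |(Ioi 0).indicator D v| ≤ C := by
    by_cases hv : v ∈ Ioi 0
    · rw [indicator_of_mem hv]
      exact hD v hv
    · rw [indicator_of_notMem hv, abs_zero]
      exact (abs_nonneg _).trans (hD 1 one_pos)
  have smoothed (L : ℝ) (hL : 0 < L) :
      Tendsto (fun w ↦ ∫ v, (Ioi 0).indicator D v * fejerKernel L (w - v)) atTop (𝓝 0) := by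
    refine (tendsto_integral_mul_fejerKernel hDm hD hH hDH hL).congr fun w ↦ ?_
    simp_rw [← integral_indicator measurableSet_Ioi, indicator_mul_left]
  filter_upwards [eventually_gt_atTop η, eventually_exists_lt_of_tendsto_integral_mul_fejerKernel
    (hDm.indicator measurableSet_Ioi) bounded smoothed hε hη] with w hw ⟨v, hv, hvε⟩
  have v_pos : v ∈ Ioi 0 := mem_Ioi.2 (by linarith [hv.1])
  exact ⟨v, hv, by rwa [indicator_of_mem v_pos] at hvε⟩

theorem SlowlyDecreasing.tendsto_zero_of_eqOn_laplaceTransform {D : ℝ → ℝ} {C : ℝ} {H : ℂ → ℂ}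
    (hslow : SlowlyDecreasing D) (hDm : Measurable D) (hD : ∀ v > 0, |D v| ≤ C)
    (hH : ContinuousOn H {z | 0 ≤ z.re}) (hDH : EqOn (laplaceTransform D) H {z | 0 < z.re}) :
    Tendsto D atTop (𝓝 0) := by
  have hDH_neg : EqOn (laplaceTransform fun v ↦ -D v) (fun z ↦ -H z) {z | 0 < z.re} := by
    intro z hz
    simp only [← hDH hz, laplaceTransform, Complex.ofReal_neg, neg_mul, integral_neg]
  refine tendsto_order.2 ⟨fun a ha ↦ ?_, fun b hb ↦ ?_⟩
  · obtain ⟨η, hη, hdrop⟩ := hslow (-a / 2) (by linarith)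
    obtain ⟨V, hV⟩ := eventually_atTop.1 hdrop
    have window_before := (tendsto_atTop_add_const_right _ (-(η / 2)) tendsto_id).eventually
      (eventually_exists_lt_of_eqOn_laplaceTransform hDm.neg
        (fun v hv ↦ (abs_neg (D v)).trans_le (hD v hv)) hH.neg hDH_neg
        (by linarith : 0 < -a / 2) (half_pos hη))
    filter_upwards [eventually_ge_atTop (V + η), window_before] with w hw ⟨v, hv, hva⟩
    simp only [id, mem_Icc, Pi.neg_apply] at hv hva
    have := hV v (by linarith) w ⟨by linarith, by linarith⟩
    linarith
  · obtain ⟨η, hη, hdrop⟩ := hslow (b / 2) (half_pos hb)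
    have window_after := (tendsto_atTop_add_const_right _ (η / 2) tendsto_id).eventually
      (eventually_exists_lt_of_eqOn_laplaceTransform hDm hD hH hDH (half_pos hb) (half_pos hη))
    filter_upwards [hdrop, window_after] with w hw ⟨v, hv, hvb⟩
    simp only [id, mem_Icc] at hv
    have := hw v ⟨by linarith, by linarith⟩
    linarith

end

/-! ### The Wiener–Ikehara theorem -/

section

open MeasureTheory Set
open scoped Topology

/-- The summatory function of `a` at `e ^ v`, divided by `e ^ v`. -/
noncomputable def normalizedSum (a : ℕ → ℝ) (v : ℝ) : ℝ :=
  Real.exp (-v) * ∑ n ∈ Finset.Icc 1 ⌊Real.exp v⌋₊, a n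

namespace normalizedSum

variable {a : ℕ → ℝ} {C : ℝ}

lemma measurable (a : ℕ → ℝ) : Measurable (normalizedSum a) :=
  (by fun_prop : Measurable fun v : ℝ ↦ Real.exp (-v)).mul
    ((measurable_from_nat (f := fun n ↦ ∑ k ∈ Finset.Icc 1 n, a k)).comp
      (Nat.measurable_floor.comp Real.measurable_exp))

lemma nonneg (ha : ∀ n, 0 ≤ a n) (v : ℝ) : 0 ≤ normalizedSum a v :=
  mul_nonneg (Real.exp_pos _).le (Finset.sum_nonneg fun n _ ↦ ha n)

lemma le_of_sum_le (hC : 0 ≤ C) (haC : ∀ n : ℕ, ∑ k ∈ Finset.Icc 1 n, a k ≤ C * n) (v : ℝ) :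
    normalizedSum a v ≤ C := by
  calc normalizedSum a v ≤ Real.exp (-v) * (C * Real.exp v) := by
        refine mul_le_mul_of_nonneg_left ((haC _).trans ?_) (Real.exp_pos _).le
        exact mul_le_mul_of_nonneg_left (Nat.floor_le (Real.exp_pos v).le) hC
    _ = C := by rw [mul_left_comm, ← Real.exp_add, neg_add_cancel, Real.exp_zero, mul_one]

lemma exp_neg_sub_mul_le (ha : ∀ n, 0 ≤ a n) {v v' : ℝ} (h : v ≤ v') :
    Real.exp (-(v' - v)) * normalizedSum a v ≤ normalizedSum a v' := by
  rw [normalizedSum, ← mul_assoc, ← Real.exp_add, neg_sub, sub_add_eq_add_sub, add_neg_cancel,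
    zero_sub]
  refine mul_le_mul_of_nonneg_left ?_ (Real.exp_pos _).le
  exact Finset.sum_le_sum_of_subset_of_nonneg
    (Finset.Icc_subset_Icc_right (Nat.floor_le_floor (Real.exp_le_exp.2 h))) fun n _ _ ↦ ha n

lemma slowlyDecreasing_sub_const (ha : ∀ n, 0 ≤ a n) (hC : 0 ≤ C)
    (haC : ∀ n : ℕ, ∑ k ∈ Finset.Icc 1 n, a k ≤ C * n) (A : ℝ) :
    SlowlyDecreasing fun v ↦ normalizedSum a v - A := by
  intro ε hε
  refine ⟨ε / (C + 1), by positivity, .of_forall fun v v' hv' ↦ ?_⟩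
  have exp_ge := Real.add_one_le_exp (-(v' - v))
  have gap : (v' - v) * (C + 1) ≤ ε := (le_div_iff₀ (by positivity)).1 (by linarith [hv'.2])
  have upper := le_of_sum_le hC haC v
  nlinarith [exp_neg_sub_mul_le ha hv'.1, nonneg ha v, hv'.1]

lemma integrableOn_mul_exp (ha : ∀ n, 0 ≤ a n) (hC : 0 ≤ C)
    (haC : ∀ n : ℕ, ∑ k ∈ Finset.Icc 1 n, a k ≤ C * n) {z : ℂ} (hz : 0 < z.re) :
    IntegrableOn (fun v : ℝ ↦ (normalizedSum a v : ℂ) * Complex.exp (-z * v)) (Ioi 0) := by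
  refine (integrableOn_exp_mul_complex_Ioi (a := -z) (by simpa using hz) 0).bdd_mul (c := C)
    (Complex.measurable_ofReal.comp (measurable a)).aestronglyMeasurable (ae_of_all _ fun v ↦ ?_)
  rw [Complex.norm_real, Real.norm_of_nonneg (nonneg ha v)]
  exact le_of_sum_le hC haC v

lemma laplaceTransform_eq (ha : ∀ n, 0 ≤ a n)
    (haC : ∀ n : ℕ, ∑ k ∈ Finset.Icc 1 n, a k ≤ C * n) {z : ℂ} (hz : 0 < z.re) :
    laplaceTransform (normalizedSum a) z = LSeries (fun n ↦ a n) (1 + z) / (1 + z) := by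
  have isBigO : (fun n ↦ ∑ k ∈ Finset.Icc 1 n, a k) =O[atTop] fun n : ℕ ↦ (n : ℝ) ^ (1 : ℝ) := by
    refine .of_bound C (.of_forall fun n ↦ ?_)
    rw [Real.rpow_one, Real.norm_of_nonneg (Finset.sum_nonneg fun k _ ↦ ha k),
      Real.norm_of_nonneg n.cast_nonneg]
    exact haC n
  have hz₁ : 1 + z ≠ 0 := fun h ↦ by
    have := congrArg Complex.re h
    simp only [Complex.add_re, Complex.one_re, Complex.zero_re] at this
    linarith
  rw [LSeries_eq_mul_integral_of_nonneg a zero_le_one (by simpa using hz) isBigO ha,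
    mul_div_cancel_left₀ _ hz₁, ← Real.exp_zero, ← integral_comp_exp_Ioi, laplaceTransform]
  congr 1 with v
  rw [normalizedSum, Complex.cpow_def_of_ne_zero (by exact_mod_cast (Real.exp_pos v).ne'),
    ← Complex.ofReal_log (Real.exp_pos v).le, Real.log_exp, Complex.real_smul]
  have combine_exp : Complex.exp (-v) * Complex.exp (-z * v) =
      Complex.exp v * Complex.exp (v * -(1 + z + 1)) := by
    rw [← Complex.exp_add, ← Complex.exp_add]
    congr 1
    ring
  push_cast
  linear_combination (∑ k ∈ Finset.Icc 1 ⌊Real.exp v⌋₊, (a k : ℂ)) * combine_exp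

lemma laplaceTransform_sub_const (ha : ∀ n, 0 ≤ a n) (hC : 0 ≤ C)
    (haC : ∀ n : ℕ, ∑ k ∈ Finset.Icc 1 n, a k ≤ C * n) (A : ℝ) {z : ℂ} (hz : 0 < z.re) :
    laplaceTransform (fun v ↦ normalizedSum a v - A) z =
      LSeries (fun n ↦ a n) (1 + z) / (1 + z) - A / z := by
  have hz' : (-z).re < 0 := by simpa using hz
  have constant : ∫ v in Ioi (0 : ℝ), (A : ℂ) * Complex.exp (-z * v) = A / z := by
    rw [integral_const_mul, integral_exp_mul_complex_Ioi hz' 0]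
    simp [div_eq_mul_inv]
  rw [← laplaceTransform_eq ha haC hz, ← constant, laplaceTransform, laplaceTransform,
    ← integral_sub (integrableOn_mul_exp ha hC haC hz)
      ((integrableOn_exp_mul_complex_Ioi hz' 0).const_mul _)]
  simp only [Complex.ofReal_sub, sub_mul]

end normalizedSum

/-- The **Wiener–Ikehara theorem**, assuming in addition a Chebyshev bound. -/
theorem wiener_ikehara {a : ℕ → ℝ} {A C : ℝ} {G : ℂ → ℂ} (ha : ∀ n, 0 ≤ a n)
    (haC : ∀ n : ℕ, ∑ k ∈ Finset.Icc 1 n, a k ≤ C * n) (hG : ContinuousOn G {s | 1 ≤ s.re})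
    (haG : EqOn G (fun s ↦ LSeries (fun n ↦ a n) s - A / (s - 1)) {s | 1 < s.re}) :
    Tendsto (fun n : ℕ ↦ (∑ k ∈ Finset.Icc 1 n, a k) / n) atTop (𝓝 A) := by
  have hC : 0 ≤ C := (ha 1).trans (by simpa using haC 1)
  have one_add_ne_zero {z : ℂ} (hz : 0 ≤ z.re) : 1 + z ≠ 0 := fun h ↦ by
    have := congrArg Complex.re h
    simp only [Complex.add_re, Complex.one_re, Complex.zero_re] at this
    linarith
  have boundary : ContinuousOn (fun z ↦ (G (1 + z) - A) / (1 + z)) {z | 0 ≤ z.re} :=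
    ((hG.comp (by fun_prop) fun z hz ↦ by simpa using hz).sub continuousOn_const).div
      (by fun_prop) fun z hz ↦ one_add_ne_zero hz
  have transform : EqOn (laplaceTransform fun v ↦ normalizedSum a v - A)
      (fun z ↦ (G (1 + z) - A) / (1 + z)) {z | 0 < z.re} := by
    intro z hz
    rw [mem_ofPred_eq] at hz
    have hz₀ : z ≠ 0 := by
      rintro rfl
      exact lt_irrefl _ hz
    have hz₁ := one_add_ne_zero hz.le
    simp only [normalizedSum.laplaceTransform_sub_const ha hC haC A hz,
      haG (show 1 < (1 + z).re by simpa using hz), add_sub_cancel_left]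
    field_simp
    ring
  have bounded : ∀ v > 0, |normalizedSum a v - A| ≤ C + |A| := fun v _ ↦ by
    refine (abs_sub _ _).trans (add_le_add_left ?_ _)
    rw [abs_of_nonneg (normalizedSum.nonneg ha v)]
    exact normalizedSum.le_of_sum_le hC haC v
  have limit := (normalizedSum.slowlyDecreasing_sub_const ha hC haC
    A).tendsto_zero_of_eqOn_laplaceTransform ((normalizedSum.measurable a).sub_const A) bounded
    boundary transform
  refine (tendsto_sub_nhds_zero_iff.1 (limit.comp
    (Real.tendsto_log_atTop.comp tendsto_natCast_atTop_atTop))).congr' ?_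
  filter_upwards [eventually_gt_atTop 0] with n hn
  have hn' : (0 : ℝ) < n := by exact_mod_cast hn
  simp only [Function.comp_apply, normalizedSum, Real.exp_neg, Real.exp_log hn',
    Nat.floor_natCast, div_eq_inv_mul]

end

/-! ### Mean values along the primes -/

section

open scoped Topology

/-- `f` has mean value `A` along the primes: `∑_{p ≤ n} f(p) log p ∼ A n`. -/
def HasPrimeMean (f : ℕ → ℝ) (A : ℝ) : Prop :=
  Tendsto (fun n : ℕ ↦ (∑ p ∈ n.primesLE, f p * Real.log p) / n) atTop (𝓝 A)

namespace HasPrimeMean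

variable {f g : ℕ → ℝ} {A : ℝ}

lemma congr (hf : HasPrimeMean f A) (h : ∀ p, p.Prime → f p = g p) : HasPrimeMean g A := by
  refine Tendsto.congr (fun n ↦ congrArg (· / (n : ℝ)) (Finset.sum_congr rfl fun p hp ↦ ?_)) hf
  rw [h p (Nat.prime_of_mem_primesLE hp)]

lemma sum_const_mul {ι : Type*} {s : Finset ι} {F : ι → ℕ → ℝ} {B : ι → ℝ} (c : ι → ℝ)
    (hF : ∀ i ∈ s, HasPrimeMean (F i) (B i)) :
    HasPrimeMean (fun p ↦ ∑ i ∈ s, c i * F i p) (∑ i ∈ s, c i * B i) := by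
  refine (tendsto_finsetSum s fun i hi ↦ (hF i hi).const_mul (c i)).congr fun n ↦ ?_
  simp_rw [← mul_div_assoc, ← Finset.sum_div, Finset.mul_sum, Finset.sum_mul, ← mul_assoc]
  rw [Finset.sum_comm]

lemma of_tendsto_abs_sub_le {F : ℕ → ℕ → ℝ} {B t : ℕ → ℝ} (hF : ∀ y, HasPrimeMean (F y) (B y))
    (hB : Tendsto B atTop (𝓝 A)) (ht : Tendsto t atTop (𝓝 0))
    (h : ∀ y n : ℕ, |∑ p ∈ n.primesLE, (f p - F y p) * Real.log p| ≤ t y * n) :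
    HasPrimeMean f A := by
  refine TendstoUniformlyOnFilter.tendsto_of_eventually_tendsto (p := atTop) ?_ (.of_forall hF) hB
  rw [Metric.tendstoUniformlyOnFilter_iff]
  intro ε hε
  have approx : ∀ᶠ yn : ℕ × ℕ in atTop ×ˢ atTop, t yn.1 < ε ∧ 0 < yn.2 :=
    (ht.eventually_lt_const hε).prod_mk (eventually_gt_atTop 0)
  filter_upwards [approx] with ⟨y, n⟩ ⟨hy, hn⟩
  have hn' : (0 : ℝ) < n := by exact_mod_cast hn
  rw [Real.dist_eq, ← sub_div, ← Finset.sum_sub_distrib, abs_div, abs_of_pos hn', div_lt_iff₀ hn']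
  simp_rw [← sub_mul]
  exact (h y n).trans_lt (mul_lt_mul_of_pos_right hy hn')

lemma of_abs_sub_le (hf : HasPrimeMean f A) {c : ℕ → ℝ}
    (h : ∀ p, p.Prime → |g p - f p| ≤ c p)
    (hc : Tendsto (fun n ↦ c n * Real.log n) atTop (𝓝 0)) : HasPrimeMean g A := by
  let u : ℕ → ℝ := fun p ↦ if p.Prime then (g p - f p) * Real.log p else 0
  have hu : Tendsto u atTop (𝓝 0) := by
    refine squeeze_zero_norm (fun p ↦ ?_) (by simpa using hc.abs)
    by_cases hp : p.Prime
    · simp only [u, if_pos hp, Real.norm_eq_abs, abs_mul]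
      exact mul_le_mul_of_nonneg_right ((h p hp).trans (le_abs_self _)) (abs_nonneg _)
    · simp only [u, if_neg hp, norm_zero]
      positivity
  have shift : Tendsto (fun n : ℕ ↦ ((n + 1 : ℕ) : ℝ) / n) atTop (𝓝 1) := by
    simpa using (tendsto_natCast_div_add_atTop (1 : ℝ)).inv₀ one_ne_zero
  have sum_u : ∀ n : ℕ, ∑ p ∈ Finset.range (n + 1), u p =
      ∑ p ∈ n.primesLE, g p * Real.log p - ∑ p ∈ n.primesLE, f p * Real.log p := fun n ↦ by
    rw [← Finset.sum_filter, ← Nat.primesLE_eq_filter_range, ← Finset.sum_sub_distrib]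
    simp_rw [sub_mul]
  have mean_u := (hu.cesaro.comp (tendsto_add_atTop_nat 1)).mul shift
  have := hf.add mean_u
  rw [zero_mul, add_zero] at this
  refine this.congr fun n ↦ ?_
  have : ((n + 1 : ℕ) : ℝ) ≠ 0 := by positivity
  simp only [Function.comp_apply, sum_u]
  field_simp
  ring

theorem of_residueClass {d : ℕ} [NeZero d] {a : ZMod d} (ha : IsUnit a) :
    HasPrimeMean (fun p ↦ if (p : ZMod d) = a then 1 else 0) (d.totient : ℝ)⁻¹ := by
  let r := ArithmeticFunction.vonMangoldt.residueClass a
  have r_nonneg : ∀ n, 0 ≤ r n := ArithmeticFunction.vonMangoldt.residueClass_nonneg a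
  have r_le : ∀ n, r n ≤ ArithmeticFunction.vonMangoldt n :=
    ArithmeticFunction.vonMangoldt.residueClass_le a
  have mean_r : Tendsto (fun n : ℕ ↦ (∑ k ∈ Finset.Ioc 0 n, r k) / n) atTop
      (𝓝 (d.totient : ℝ)⁻¹) := by
    refine wiener_ikehara (C := Real.log 4 + 4) r_nonneg (fun n ↦ ?_)
      (ArithmeticFunction.vonMangoldt.continuousOn_LFunctionResidueClassAux a) ?_
    · refine (Finset.sum_le_sum fun k _ ↦ r_le k).trans ?_
      simpa [Chebyshev.psi, ← Finset.Icc_add_one_left_eq_Ioc] using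
        Chebyshev.psi_le_const_mul_self n.cast_nonneg
    · simpa using ArithmeticFunction.vonMangoldt.eqOn_LFunctionResidueClassAux ha
  have sum_primes : ∀ n : ℕ, ∑ k ∈ Finset.Ioc 0 n with k.Prime, r k =
      ∑ p ∈ n.primesLE, (if (p : ZMod d) = a then 1 else 0) * Real.log p := fun n ↦ by
    rw [← Nat.primesLE_eq_filter_Ioc_zero]
    refine Finset.sum_congr rfl fun p hp ↦ ?_
    simp [r, Set.indicator_apply,
      ArithmeticFunction.vonMangoldt_apply_prime (Nat.prime_of_mem_primesLE hp)]
  have nonprimes : Tendsto (fun n : ℕ ↦ (∑ k ∈ Finset.Ioc 0 n with ¬k.Prime, r k) / n) atTop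
      (𝓝 0) := by
    obtain ⟨C, hC⟩ := Chebyshev.psi_sub_theta_le_mul_sqrt
    have sqrt_div : Tendsto (fun n : ℕ ↦ C * (√(n : ℝ))⁻¹) atTop (𝓝 0) := by
      simpa using (Real.tendsto_sqrt_atTop.comp
        tendsto_natCast_atTop_atTop).inv_tendsto_atTop.const_mul C
    refine squeeze_zero (fun n ↦ div_nonneg (Finset.sum_nonneg fun k _ ↦ r_nonneg k)
      n.cast_nonneg) (fun n ↦ ?_) sqrt_div
    rw [← Real.sqrt_div_self, ← mul_div_assoc]
    refine div_le_div_of_nonneg_right (le_trans ?_ (hC n)) n.cast_nonneg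
    rw [Chebyshev.psi_sub_theta_eq_sum_not_prime, Nat.floor_natCast]
    exact Finset.sum_le_sum fun k _ ↦ r_le k
  refine (by simpa using mean_r.sub nonprimes : Tendsto _ _ _).congr fun n ↦ ?_
  rw [← sub_div, ← sum_primes, ← Finset.sum_filter_add_sum_filter_not _ Nat.Prime,
    add_sub_cancel_right]

theorem one : HasPrimeMean 1 1 := by
  have : HasPrimeMean (fun p ↦ if (p : ZMod 1) = 1 then 1 else 0) _ := of_residueClass isUnit_one
  simpa [HasPrimeMean, Subsingleton.elim _ (1 : ZMod 1)] using this

end HasPrimeMean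

end

/-! ### Primes in a residue class: an upper bound -/

section

open Finset
open scoped Nat

lemma dvd_prod_range_mul_add_of_dvd_factorial {F q M : ℕ} (hFq : F.Coprime q) (hF : F ∣ M !)
    (r : ℕ) : F ∣ ∏ m ∈ range M, (q * m + r) := by
  have : NeZero F := ⟨ne_zero_of_dvd_ne_zero M.factorial_ne_zero hF⟩
  let s : ℕ := ((q : ZMod F)⁻¹ * r).val
  have hs : (q : ZMod F) * s = r := by
    rw [ZMod.natCast_zmod_val, ← mul_assoc, ZMod.coe_mul_inv_eq_one q hFq.symm, one_mul]
  have prod_eq : ((∏ m ∈ range M, (q * m + r) : ℕ) : ZMod F) =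
      (q ^ M * s.ascFactorial M : ℕ) := by
    rw [Nat.ascFactorial_eq_prod_range, ← card_range M, ← prod_const, card_range,
      ← prod_mul_distrib]
    push_cast
    exact prod_congr rfl fun m _ ↦ by rw [mul_add, hs, add_comm]
  rw [← ZMod.natCast_eq_zero_iff, prod_eq, ZMod.natCast_eq_zero_iff]
  exact (hF.trans (Nat.factorial_dvd_ascFactorial _ _)).mul_left _

/-- Up to its `q`-part, `M!` divides the product of the `M` terms `qm + r`, and it is coprime to the
primes above `M` among these terms; so those primes have product at most
`q ^ v_q(M!) * ∏ (qm + r) / M!`. -/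
lemma prod_primes_le_pow_of_eq_mul_add {q M r : ℕ} (hq : q.Prime) (hr : 0 < r) (hrq : r ≤ q)
    {T : Finset ℕ} (hT : ∀ p ∈ T, p.Prime ∧ M < p ∧ ∃ m < M, p = q * m + r) :
    ∏ p ∈ T, p ≤ q ^ (2 * M) := by
  set v := (M !).factorization q
  set F := M ! / q ^ v
  have factorial_eq : q ^ v * F = M ! := Nat.ordProj_mul_ordCompl_eq_self _ _
  have F_pos : 0 < F := Nat.ordCompl_pos q M.factorial_ne_zero
  have F_dvd : F ∣ M ! := Dvd.intro_left _ factorial_eq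
  have coprime : F.Coprime (∏ p ∈ T, p) := by
    refine Nat.Coprime.prod_right fun p hp ↦ ?_
    obtain ⟨hp_prime, hMp, -⟩ := hT p hp
    rw [Nat.coprime_comm, hp_prime.coprime_iff_not_dvd]
    exact fun h ↦ hMp.not_ge (hp_prime.dvd_factorial.1 (h.trans F_dvd))
  have prod_dvd : ∏ p ∈ T, p ∣ ∏ m ∈ range M, (q * m + r) := by
    refine prod_primes_dvd _ (fun p hp ↦ (hT p hp).1.prime) fun p hp ↦ ?_
    obtain ⟨-, -, m, hm, rfl⟩ := hT p hp
    exact dvd_prod_of_mem (fun m ↦ q * m + r) (mem_range.2 hm)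
  have v_le : v ≤ M := (Nat.factorization_factorial_le_div_pred hq M).trans (Nat.div_le_self _ _)
  refine Nat.le_of_mul_le_mul_left (c := F) ?_ F_pos
  calc F * ∏ p ∈ T, p ≤ ∏ m ∈ range M, (q * m + r) :=
        Nat.le_of_dvd (prod_pos fun m _ ↦ by positivity) <| coprime.mul_dvd_of_dvd_of_dvd
          (dvd_prod_range_mul_add_of_dvd_factorial
            (Nat.coprime_ordCompl hq M.factorial_ne_zero).symm F_dvd r) prod_dvd
    _ ≤ ∏ m ∈ range M, q * (m + 1) := prod_le_prod' fun m _ ↦ by rw [mul_add_one]; lia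
    _ = q ^ M * M ! := by
        rw [prod_mul_distrib, prod_const, card_range, prod_range_add_one_eq_factorial]
    _ = F * q ^ (M + v) := by rw [← factorial_eq, pow_add]; ring
    _ ≤ F * q ^ (2 * M) := by gcongr <;> [exact hq.one_le; lia]

lemma sum_log_primes_residueClass_gt_le {q n : ℕ} (hq : q.Prime) {a : ZMod q} (ha : a ≠ 0) :
    ∑ p ∈ n.primesLE with ((p : ℕ) : ZMod q) = a ∧ n / q + 1 < p, Real.log p ≤
      2 * (n / q + 1 : ℕ) * Real.log q := by
  have : NeZero q := ⟨hq.ne_zero⟩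
  have prod_le := prod_primes_le_pow_of_eq_mul_add hq
    (Nat.pos_of_ne_zero (ZMod.val_ne_zero a |>.2 ha)) a.val_le
    (T := {p ∈ n.primesLE | ((p : ℕ) : ZMod q) = a ∧ n / q + 1 < p}) (M := n / q + 1) fun p hp ↦ by
      obtain ⟨hpn, rfl, hMp⟩ := mem_filter.1 hp
      refine ⟨Nat.prime_of_mem_primesLE hpn, hMp, p / q, Nat.lt_succ_of_le
        (Nat.div_le_div_right (Nat.le_of_mem_primesLE hpn)), ?_⟩
      rw [ZMod.val_natCast, Nat.div_add_mod]
  have pos : ∀ p ∈ n.primesLE, (0 : ℝ) < p := fun p hp ↦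
    Nat.cast_pos.2 (Nat.prime_of_mem_primesLE hp).pos
  calc _ = Real.log (∏ p ∈ n.primesLE with ((p : ℕ) : ZMod q) = a ∧ n / q + 1 < p, (p : ℝ)) :=
        (Real.log_prod fun p hp ↦ (pos p (mem_filter.1 hp).1).ne').symm
    _ ≤ Real.log (q ^ (2 * (n / q + 1))) := by
        refine Real.log_le_log (prod_pos fun p hp ↦ pos p (mem_filter.1 hp).1) ?_
        rw [← Nat.cast_prod]
        exact_mod_cast prod_le
    _ = 2 * (n / q + 1 : ℕ) * Real.log q := by
        rw [Real.log_pow]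
        push_cast
        ring

/-- A weak form of the Brun–Titchmarsh inequality. -/
lemma sum_log_primes_residueClass_le {q n : ℕ} (hq : q.Prime) (hqn : q ≤ n) {a : ZMod q}
    (ha : a ≠ 0) :
    ∑ p ∈ n.primesLE with ((p : ℕ) : ZMod q) = a, Real.log p ≤ 8 * n * Real.log q / q := by
  set M := n / q + 1
  have q_pos : (0 : ℝ) < q := by exact_mod_cast hq.pos
  have M_le : (M : ℝ) ≤ 2 * n / q := by
    have : (1 : ℝ) ≤ n / q := (one_le_div q_pos).2 (by exact_mod_cast hqn)
    push_cast [M]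
    linarith [Nat.cast_div_le (α := ℝ) (m := n) (n := q), mul_div_assoc 2 (n : ℝ) q]
  have log_four_le : Real.log 4 ≤ 2 * Real.log q := by
    rw [show (4 : ℝ) = 2 ^ 2 by norm_num, Real.log_pow, Nat.cast_ofNat]
    gcongr
    exact_mod_cast hq.two_le
  have small : ∑ p ∈ n.primesLE with ((p : ℕ) : ZMod q) = a ∧ ¬M < p, Real.log p ≤
      2 * M * Real.log q := by
    calc _ ≤ ∑ p ∈ M.primesLE, Real.log p :=
          sum_le_sum_of_subset_of_nonneg (fun p hp ↦ by
            simp only [mem_filter, Nat.mem_primesLE] at hp ⊢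
            exact ⟨not_lt.1 hp.2.2, hp.1.2⟩) fun p _ _ ↦ Real.log_natCast_nonneg p
      _ ≤ Real.log 4 * M := by
          rw [← Chebyshev.theta_eq_sum_primesLE_log]
          exact Chebyshev.theta_le_log4_mul_x M.cast_nonneg
      _ ≤ 2 * M * Real.log q := by nlinarith [M.cast_nonneg (α := ℝ)]
  rw [← sum_filter_add_sum_filter_not _ (M < ·), filter_filter, filter_filter]
  calc _ ≤ 2 * M * Real.log q + 2 * M * Real.log q :=
        add_le_add (sum_log_primes_residueClass_gt_le hq ha) small
    _ = 4 * Real.log q * M := by ring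
    _ ≤ 4 * Real.log q * (2 * n / q) := by gcongr
    _ = 8 * n * Real.log q / q := by ring

end

/-! ### The mean value of `φ(p - 1) / (p - 1)` -/

section

open Finset
open scoped Topology

lemma natCast_eq_one_iff_dvd_sub_one {d n : ℕ} (hn : 1 ≤ n) : (n : ZMod d) = 1 ↔ d ∣ n - 1 := by
  rw [← Nat.cast_one, eq_comm, ZMod.natCast_eq_natCast_iff, Nat.modEq_iff_dvd' hn]

lemma hasPrimeMean_dvd_sub_one {d : ℕ} (hd : d ≠ 0) :
    HasPrimeMean (fun p ↦ if d ∣ p - 1 then 1 else 0) (d.totient : ℝ)⁻¹ := by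
  have : NeZero d := ⟨hd⟩
  refine (HasPrimeMean.of_residueClass (d := d) isUnit_one).congr fun p hp ↦ ?_
  simp_rw [natCast_eq_one_iff_dvd_sub_one hp.one_le]

lemma totient_prod_primes {T : Finset ℕ} (hT : ∀ q ∈ T, q.Prime) :
    (∏ q ∈ T, q).totient = ∏ q ∈ T, (q - 1) := by
  have prod_pos : 0 < ∏ q ∈ T, q := prod_pos fun q hq ↦ (hT q hq).pos
  have := Nat.totient_mul_prod_primeFactors (∏ q ∈ T, q)
  rw [Nat.primeFactors_prod hT, mul_comm] at this
  exact Nat.eq_of_mul_eq_mul_left prod_pos this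

lemma prod_ite_dvd_primes {R : Type*} [CommSemiring R] {T : Finset ℕ} (hT : ∀ q ∈ T, q.Prime)
    (g : ℕ → R) (n : ℕ) :
    ∏ q ∈ T, (if q ∣ n then g q else 0) =
      (∏ q ∈ T, g q) * if ∏ q ∈ T, q ∣ n then 1 else 0 := by
  have dvd_iff : (∀ q ∈ T, q ∣ n) ↔ ∏ q ∈ T, q ∣ n :=
    ⟨prod_primes_dvd n fun q hq ↦ (hT q hq).prime, fun h q hq ↦ (dvd_prod_of_mem _ hq).trans h⟩
  rw [prod_ite_zero, mul_ite, mul_one, mul_zero]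
  simp_rw [dvd_iff]

lemma hasPrimeMean_prod_one_add {S : Finset ℕ} (hS : ∀ q ∈ S, q.Prime) (g : ℕ → ℝ) :
    HasPrimeMean (fun p ↦ ∏ q ∈ S, (1 + if q ∣ p - 1 then g q else 0))
      (∏ q ∈ S, (1 + g q / (q - 1))) := by
  have prime_of_mem : ∀ T ∈ S.powerset, ∀ q ∈ T, q.Prime := fun T hT q hq ↦
    hS q (mem_powerset.1 hT hq)
  have mean_term : ∀ T ∈ S.powerset, HasPrimeMean (fun p ↦ if ∏ q ∈ T, q ∣ p - 1 then 1 else 0)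
      ((∏ q ∈ T, q).totient : ℝ)⁻¹ := fun T hT ↦
    hasPrimeMean_dvd_sub_one (prod_ne_zero_iff.2 fun q hq ↦ (prime_of_mem T hT q hq).ne_zero)
  have mean_value : ∏ q ∈ S, (1 + g q / (q - 1)) =
      ∑ T ∈ S.powerset, (∏ q ∈ T, g q) * ((∏ q ∈ T, q).totient : ℝ)⁻¹ := by
    rw [prod_one_add]
    refine sum_congr rfl fun T hT ↦ ?_
    rw [prod_div_distrib, totient_prod_primes (prime_of_mem T hT), Nat.cast_prod, div_eq_mul_inv]
    congr 2
    exact prod_congr rfl fun q hq ↦ (Nat.cast_pred (prime_of_mem T hT q hq).pos).symm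
  rw [mean_value]
  refine (HasPrimeMean.sum_const_mul _ mean_term).congr fun p _ ↦ ?_
  rw [prod_one_add]
  exact sum_congr rfl fun T hT ↦ (prod_ite_dvd_primes (prime_of_mem T hT) g (p - 1)).symm

/-- The contribution of the primes `q ≤ y` to `φ(n) / n = ∏_{q ∣ n} (1 - 1/q)`. -/
noncomputable def truncatedTotientRatio (y n : ℕ) : ℝ :=
  ∏ q ∈ y.primesLE, (1 + if q ∣ n then -(q : ℝ)⁻¹ else 0)

lemma hasPrimeMean_truncatedTotientRatio (y : ℕ) :
    HasPrimeMean (fun p ↦ truncatedTotientRatio y (p - 1))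
      (∏ q ∈ y.primesLE, (1 - 1 / ((q : ℝ) * (q - 1)))) := by
  have factor : ∀ q : ℝ, 1 - 1 / (q * (q - 1)) = 1 + -q⁻¹ / (q - 1) := fun q ↦ by
    rw [one_div, mul_inv, sub_eq_add_neg, neg_mul_eq_neg_mul, ← div_eq_mul_inv]
  simp_rw [factor]
  exact hasPrimeMean_prod_one_add (fun q ↦ Nat.prime_of_mem_primesLE) fun q ↦ -(q : ℝ)⁻¹

lemma tendsto_prod_primesLE_artinConstant :
    Tendsto (fun y : ℕ ↦ ∏ q ∈ y.primesLE, (1 - 1 / ((q : ℝ) * (q - 1)))) atTop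
      (𝓝 artinConstant) := by
  have summable : Summable fun q : Nat.Primes ↦ -(1 / ((q : ℝ) * (q - 1))) := by
    refine .of_norm_bounded (g := fun q : Nat.Primes ↦ 2 * (1 / ((q : ℕ) : ℝ) ^ 2))
      (((Real.summable_one_div_nat_pow.2 one_lt_two).mul_left 2).subtype _) fun q ↦ ?_
    have two_le : (2 : ℝ) ≤ q := by exact_mod_cast q.2.two_le
    rw [norm_neg, Real.norm_of_nonneg (by apply div_nonneg <;> nlinarith), mul_one_div,
      div_le_div_iff₀ (by nlinarith) (by positivity)]
    nlinarith
  have hasProd := (Real.multipliable_one_add_of_summable summable).hasProd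
  simp_rw [← sub_eq_add_neg] at hasProd
  have := (Nat.Primes.hasProd_iff_hasProd_ite (f := fun q : ℕ ↦
    1 - 1 / ((q : ℝ) * (q - 1)))).1 hasProd
  refine (this.tendsto_prod_nat.comp (tendsto_add_atTop_nat 1)).congr fun y ↦ ?_
  rw [Function.comp_apply, Nat.primesLE_eq_filter_range, prod_filter]

lemma one_sub_sum_le_prod_one_sub {ι R : Type*} [CommRing R] [LinearOrder R]
    [IsStrictOrderedRing R] {s : Finset ι} {a : ι → R} (ha₀ : ∀ i ∈ s, 0 ≤ a i)
    (ha₁ : ∀ i ∈ s, a i ≤ 1) : 1 - ∑ i ∈ s, a i ≤ ∏ i ∈ s, (1 - a i) := by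
  classical
  induction s using Finset.induction_on with
  | empty => simp
  | insert b s hb ih =>
    simp only [forall_mem_insert] at ha₀ ha₁
    rw [sum_insert hb, prod_insert hb]
    nlinarith [ih ha₀.2 ha₁.2, prod_nonneg fun i hi ↦ sub_nonneg.2 (ha₁.2 i hi), ha₀.1, ha₁.1,
      sum_nonneg ha₀.2]

lemma abs_totient_div_sub_truncatedTotientRatio_le {n : ℕ} (hn : n ≠ 0) (y : ℕ) :
    |n.totient / n - truncatedTotientRatio y n| ≤ ∑ q ∈ n.primeFactors with y < q, (q : ℝ)⁻¹ := by
  have inv_le_one : ∀ q : ℕ, (q : ℝ)⁻¹ ≤ 1 := Nat.cast_inv_le_one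
  have totient_div : (n.totient : ℝ) / n = ∏ q ∈ n.primeFactors, (1 - (q : ℝ)⁻¹) := by
    rw [div_eq_iff (Nat.cast_ne_zero.2 hn), mul_comm]
    have := congrArg (Rat.cast (K := ℝ)) (Nat.totient_eq_mul_prod_factors n)
    push_cast at this
    exact this
  have truncated : truncatedTotientRatio y n =
      ∏ q ∈ n.primeFactors with ¬y < q, (1 - (q : ℝ)⁻¹) := by
    have : {q ∈ n.primeFactors | ¬y < q} = {q ∈ y.primesLE | q ∣ n} := by
      ext q
      simp only [mem_filter, Nat.mem_primeFactors, Nat.mem_primesLE, not_lt]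
      tauto
    rw [this, prod_filter, truncatedTotientRatio]
    refine prod_congr rfl fun q _ ↦ ?_
    split_ifs <;> ring
  have nonneg : ∀ s : Finset ℕ, 0 ≤ ∏ q ∈ s, (1 - (q : ℝ)⁻¹) := fun s ↦
    prod_nonneg fun q _ ↦ sub_nonneg.2 (inv_le_one q)
  have le_one : ∀ s : Finset ℕ, ∏ q ∈ s, (1 - (q : ℝ)⁻¹) ≤ 1 := fun s ↦
    prod_le_one (fun q _ ↦ sub_nonneg.2 (inv_le_one q)) fun q _ ↦ sub_le_self _ (by positivity)
  have lower := one_sub_sum_le_prod_one_sub (s := {q ∈ n.primeFactors | y < q})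
    (a := fun q ↦ (q : ℝ)⁻¹) (fun q _ ↦ by positivity) fun q _ ↦ inv_le_one q
  rw [totient_div, truncated, ← prod_filter_mul_prod_filter_not n.primeFactors (y < ·)]
  rw [abs_le]
  have h₁ := nonneg {q ∈ n.primeFactors | ¬y < q}
  have h₂ := le_one {q ∈ n.primeFactors | ¬y < q}
  have h₃ := le_one {q ∈ n.primeFactors | y < q}
  constructor <;> nlinarith

lemma summable_log_div_sq : Summable fun n : ℕ ↦ Real.log n / (n : ℝ) ^ 2 := by
  have log_le : (fun n : ℕ ↦ Real.log n) =O[atTop] fun n : ℕ ↦ (n : ℝ) ^ (1 / 2 : ℝ) :=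
    (isLittleO_log_rpow_atTop (by norm_num)).isBigO.comp_tendsto tendsto_natCast_atTop_atTop
  refine summable_of_isBigO_nat (Real.summable_nat_rpow.2 (by norm_num : -(3 / 2 : ℝ) < -1)) ?_
  refine (log_le.mul (Asymptotics.isBigO_refl (fun n : ℕ ↦ ((n : ℝ) ^ 2)⁻¹) _)).congr' ?_ ?_
  · exact .of_forall fun n ↦ (div_eq_mul_inv _ _).symm
  · filter_upwards [eventually_gt_atTop 0] with n hn
    have hn' : (0 : ℝ) < n := by exact_mod_cast hn
    rw [← Real.rpow_natCast, ← Real.rpow_neg hn'.le, ← Real.rpow_add hn']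
    norm_num

lemma sum_le_tsum_nat_add {f : ℕ → ℝ} (hf : Summable f) (hf₀ : ∀ n, 0 ≤ f n) {s : Finset ℕ}
    {y : ℕ} (hs : ∀ n ∈ s, y ≤ n) : ∑ n ∈ s, f n ≤ ∑' i, f (i + y) := by
  have disjoint : Disjoint (range y) s := disjoint_left.2 fun n hn hns ↦
    (mem_range.1 hn).not_ge (hs n hns)
  have := hf.sum_le_tsum (range y ∪ s) fun n _ ↦ hf₀ n
  rwa [sum_union disjoint, ← hf.sum_add_tsum_nat_add y, add_le_add_iff_left] at this

lemma abs_sum_totient_sub_truncatedTotientRatio_le (y n : ℕ) :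
    |∑ p ∈ n.primesLE, ((p - 1).totient / (p - 1 : ℕ) - truncatedTotientRatio y (p - 1)) *
      Real.log p| ≤
        8 * (∑' i : ℕ, Real.log (i + (y + 1) : ℕ) / ((i + (y + 1) : ℕ) : ℝ) ^ 2) * n := by
  have swap : ∀ p q : ℕ, p ∈ n.primesLE ∧ q ∈ {q ∈ (p - 1).primeFactors | y < q} ↔
      p ∈ {p ∈ n.primesLE | ((p : ℕ) : ZMod q) = 1} ∧ q ∈ {q ∈ n.primesLE | y < q} := by
    intro p q
    simp only [mem_filter, Nat.mem_primesLE, Nat.mem_primeFactors]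
    constructor
    · rintro ⟨⟨hpn, hp⟩, ⟨hq, hqp, hp₁⟩, hyq⟩
      have := Nat.le_of_dvd (Nat.pos_of_ne_zero hp₁) hqp
      exact ⟨⟨⟨hpn, hp⟩, (natCast_eq_one_iff_dvd_sub_one hp.one_le).2 hqp⟩, ⟨by lia, hq⟩, hyq⟩
    · rintro ⟨⟨⟨hpn, hp⟩, hqp⟩, ⟨-, hq⟩, hyq⟩
      exact ⟨⟨hpn, hp⟩, ⟨hq, (natCast_eq_one_iff_dvd_sub_one hp.one_le).1 hqp,
        Nat.sub_ne_zero_of_lt hp.one_lt⟩, hyq⟩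
  have log_nonneg : ∀ p : ℕ, 0 ≤ Real.log p := Real.log_natCast_nonneg
  calc _ ≤ ∑ p ∈ n.primesLE, ∑ q ∈ (p - 1).primeFactors with y < q, (q : ℝ)⁻¹ * Real.log p := by
        refine (abs_sum_le_sum_abs _ _).trans (sum_le_sum fun p hp ↦ ?_)
        rw [abs_mul, abs_of_nonneg (log_nonneg p), ← sum_mul]
        exact mul_le_mul_of_nonneg_right (abs_totient_div_sub_truncatedTotientRatio_le
          (Nat.sub_ne_zero_of_lt (Nat.one_lt_of_mem_primesLE hp)) y) (log_nonneg p)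
    _ = ∑ q ∈ n.primesLE with y < q,
          (q : ℝ)⁻¹ * ∑ p ∈ n.primesLE with ((p : ℕ) : ZMod q) = 1, Real.log p := by
        simp_rw [mul_sum]
        exact sum_comm' swap
    _ ≤ ∑ q ∈ n.primesLE with y < q, 8 * n * (Real.log q / (q : ℝ) ^ 2) := by
        refine sum_le_sum fun q hq ↦ ?_
        obtain ⟨hqn, hq⟩ := Nat.mem_primesLE.1 (mem_filter.1 hq).1
        have : Fact q.Prime := ⟨hq⟩
        refine (mul_le_mul_of_nonneg_left (sum_log_primes_residueClass_le hq hqn one_ne_zero)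
          (by positivity)).trans_eq ?_
        ring
    _ ≤ _ := by
        rw [← mul_sum, mul_right_comm]
        refine mul_le_mul_of_nonneg_right (mul_le_mul_of_nonneg_left (sum_le_tsum_nat_add
          summable_log_div_sq (fun q ↦ div_nonneg (log_nonneg q) (by positivity)) fun q hq ↦ ?_)
          (by norm_num)) n.cast_nonneg
        exact (mem_filter.1 hq).2

theorem hasPrimeMean_totient_sub_one_div :
    HasPrimeMean (fun p ↦ (p - 1).totient / (p - 1 : ℕ)) artinConstant := by
  refine .of_tendsto_abs_sub_le hasPrimeMean_truncatedTotientRatio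
    tendsto_prod_primesLE_artinConstant ?_ abs_sum_totient_sub_truncatedTotientRatio_le
  simpa using ((tendsto_sum_nat_add fun n : ℕ ↦ Real.log n / (n : ℝ) ^ 2).comp
    (tendsto_add_atTop_nat 1)).const_mul 8

end

section

open scoped Topology

lemma totient_prime_pow_div_mem_Icc {p : ℕ} (hp : p.Prime) (k : ℕ) :
    ((p ^ k).totient : ℝ) / (p : ℝ) ^ k ∈ Set.Icc (1 - (p : ℝ)⁻¹) 1 := by
  have hp₀ : (p : ℝ) ≠ 0 := Nat.cast_ne_zero.2 hp.ne_zero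
  have inv_nonneg : 0 ≤ (p : ℝ)⁻¹ := by positivity
  cases k with
  | zero => simp
  | succ k =>
    have : ((p ^ (k + 1)).totient : ℝ) / (p : ℝ) ^ (k + 1) = 1 - (p : ℝ)⁻¹ := by
      rw [Nat.totient_prime_pow_succ hp]
      push_cast [hp.one_le]
      field_simp
      ring
    rw [this]
    exact ⟨le_rfl, by linarith⟩

lemma totient_totient_prime_pow_succ_div {p : ℕ} (hp : p.Prime) (k : ℕ) :
    ((p ^ (k + 1)).totient.totient : ℝ) / (p ^ (k + 1)).totient =
      (p ^ k).totient / (p : ℝ) ^ k * ((p - 1).totient / (p - 1 : ℕ)) := by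
  have coprime : (p ^ k).Coprime (p - 1) :=
    .pow_left k <| (Nat.coprime_self_sub_right hp.one_le).2 p.coprime_one_right
  rw [Nat.totient_prime_pow_succ hp, Nat.totient_mul coprime]
  push_cast
  rw [mul_div_mul_comm]

lemma tendsto_inv_mul_log_natCast :
    Tendsto (fun n : ℕ ↦ (n : ℝ)⁻¹ * Real.log n) atTop (𝓝 0) := by
  refine (Real.isLittleO_log_id_atTop.tendsto_div_nhds_zero.comp
    tendsto_natCast_atTop_atTop).congr fun n ↦ ?_
  simp [div_eq_inv_mul]

theorem hasPrimeMean_totient_totient_div_totient (k : ℕ) :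
    HasPrimeMean (fun p ↦ (p ^ (k + 1)).totient.totient / (p ^ (k + 1)).totient)
      artinConstant := by
  refine hasPrimeMean_totient_sub_one_div.of_abs_sub_le (c := fun n ↦ (n : ℝ)⁻¹) (fun p hp ↦ ?_)
    tendsto_inv_mul_log_natCast
  have ratio_le_one : ((p - 1).totient : ℝ) / (p - 1 : ℕ) ≤ 1 :=
    div_le_one_of_le₀ (by exact_mod_cast Nat.totient_le _) (Nat.cast_nonneg _)
  have ratio_nonneg : 0 ≤ ((p - 1).totient : ℝ) / (p - 1 : ℕ) := by positivity
  obtain ⟨lower, upper⟩ := totient_prime_pow_div_mem_Icc hp k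
  rw [totient_totient_prime_pow_succ_div hp, ← sub_one_mul, abs_mul, abs_of_nonneg ratio_nonneg,
    abs_of_nonpos (by linarith)]
  exact mul_le_of_le_one_right (by linarith) ratio_le_one |>.trans (by linarith)

end

/-! ### Mean values with weights of doubling growth -/

section

open Asymptotics Finset
open scoped Topology

lemma abs_sum_range_succ_mul_le {w e : ℕ → ℝ} {B : ℝ} {n : ℕ} (hw₀ : ∀ m, 0 ≤ w m)
    (hw : Monotone w) (hB : ∀ m ≤ n, |∑ i ∈ range (m + 1), e i| ≤ B) :
    |∑ i ∈ range (n + 1), w i * e i| ≤ 2 * B * w n := by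
  have B_nonneg : 0 ≤ B := (abs_nonneg _).trans (hB n le_rfl)
  have boundary : |w n * ∑ i ∈ range (n + 1), e i| ≤ w n * B := by
    rw [abs_mul, abs_of_nonneg (hw₀ n)]
    exact mul_le_mul_of_nonneg_left (hB n le_rfl) (hw₀ n)
  have variation : |∑ i ∈ range n, (w (i + 1) - w i) * ∑ j ∈ range (i + 1), e j| ≤ w n * B := by
    calc _ ≤ ∑ i ∈ range n, (w (i + 1) - w i) * B := by
          refine (abs_sum_le_sum_abs _ _).trans (sum_le_sum fun i hi ↦ ?_)
          have increment := sub_nonneg.2 (hw i.le_succ)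
          rw [abs_mul, abs_of_nonneg increment]
          exact mul_le_mul_of_nonneg_left (hB i (mem_range.1 hi).le) increment
      _ ≤ w n * B := by
          rw [← sum_mul, sum_range_sub]
          exact mul_le_mul_of_nonneg_right (sub_le_self _ (hw₀ 0)) B_nonneg
  have by_parts := sum_range_by_parts w e (n + 1)
  simp only [smul_eq_mul, add_tsub_cancel_right] at by_parts
  rw [by_parts]
  linarith [abs_sub (w n * ∑ i ∈ range (n + 1), e i)
    (∑ i ∈ range n, (w (i + 1) - w i) * ∑ j ∈ range (i + 1), e j)]

lemma isLittleO_sum_range_succ_mul {w e : ℕ → ℝ} (hw₀ : ∀ n, 0 ≤ w n) (hw : Monotone w)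
    (he : (fun n ↦ ∑ i ∈ range (n + 1), e i) =o[atTop] fun n ↦ (n : ℝ)) :
    (fun n ↦ ∑ i ∈ range (n + 1), w i * e i) =o[atTop] fun n ↦ n * w n := by
  rw [isLittleO_iff] at he ⊢
  intro ε hε
  obtain ⟨N, hN⟩ := eventually_atTop.1 (he (half_pos hε))
  simp only [Real.norm_eq_abs, Nat.abs_cast] at hN
  set C := ∑ m ∈ range N, |∑ i ∈ range (m + 1), e i|
  have C_le : ∀ᶠ n : ℕ in atTop, C ≤ ε / 2 * n :=
    (tendsto_natCast_atTop_atTop.const_mul_atTop (half_pos hε)).eventually_ge_atTop C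
  filter_upwards [C_le] with n hn
  have partial_sum_le : ∀ m ≤ n, |∑ i ∈ range (m + 1), e i| ≤ ε / 2 * n := fun m hm ↦ by
    rcases lt_or_ge m N with hmN | hmN
    · refine le_trans ?_ hn
      exact single_le_sum (f := fun m ↦ |∑ i ∈ range (m + 1), e i|) (fun _ _ ↦ abs_nonneg _)
        (mem_range.2 hmN)
    · exact (hN m hmN).trans (by gcongr)
  rw [Real.norm_eq_abs, Real.norm_of_nonneg (mul_nonneg n.cast_nonneg (hw₀ n))]
  exact (abs_sum_range_succ_mul_le hw₀ hw partial_sum_le).trans_eq (by ring)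

lemma eventually_div_four_le_sum_log_primesLE_sub :
    ∀ᶠ n : ℕ in atTop, (n : ℝ) / 4 ≤
      ∑ p ∈ n.primesLE, Real.log p - ∑ p ∈ (n / 2).primesLE, Real.log p := by
  have mean : Tendsto (fun n : ℕ ↦ (∑ p ∈ n.primesLE, Real.log p) / n) atTop (𝓝 1) := by
    simpa [HasPrimeMean] using HasPrimeMean.one
  have half : Tendsto (fun n : ℕ ↦ n / 2) atTop atTop := Nat.tendsto_div_const_atTop two_ne_zero
  filter_upwards [mean.eventually_const_lt (by norm_num : (7 / 8 : ℝ) < 1),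
    half.eventually (mean.eventually_lt_const (by norm_num : (1 : ℝ) < 5 / 4)),
    half.eventually_gt_atTop 0] with n lower upper hn
  have half_le : ((n / 2 : ℕ) : ℝ) ≤ n / 2 := Nat.cast_div_le
  have half_pos : (0 : ℝ) < (n / 2 : ℕ) := by exact_mod_cast hn
  rw [lt_div_iff₀ (by linarith)] at lower
  rw [div_lt_iff₀ half_pos] at upper
  linarith

lemma isBigO_sum_primesLE_mul_log {w : ℕ → ℝ} (hw₀ : ∀ n, 0 ≤ w n) (hw : Monotone w)
    (doubling : w =O[atTop] fun n ↦ w (n / 2)) :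
    (fun n : ℕ ↦ n * w n) =O[atTop] fun n ↦ ∑ p ∈ n.primesLE, w p * Real.log p := by
  refine ((isBigO_refl (fun n : ℕ ↦ (n : ℝ)) atTop).mul doubling).trans (.of_bound 4 ?_)
  filter_upwards [eventually_div_four_le_sum_log_primesLE_sub] with n hn
  have term_nonneg : ∀ p : ℕ, 0 ≤ w p * Real.log p := fun p ↦
    mul_nonneg (hw₀ p) (Real.log_natCast_nonneg p)
  have subset : (n / 2).primesLE ⊆ n.primesLE := Nat.primesLE_mono (Nat.div_le_self n 2)
  have half_le : ∀ p ∈ n.primesLE \ (n / 2).primesLE, n / 2 ≤ p := fun p hp ↦ by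
    simp only [Finset.mem_sdiff, Nat.mem_primesLE] at hp
    grind
  rw [Real.norm_of_nonneg (mul_nonneg n.cast_nonneg (hw₀ _)),
    Real.norm_of_nonneg (sum_nonneg fun p _ ↦ term_nonneg p)]
  calc n * w (n / 2) = 4 * (w (n / 2) * (n / 4)) := by ring
    _ ≤ 4 * (w (n / 2) * ∑ p ∈ n.primesLE \ (n / 2).primesLE, Real.log p) := by
        rw [← sum_sdiff subset, add_sub_cancel_right] at hn
        exact mul_le_mul_of_nonneg_left (mul_le_mul_of_nonneg_left hn (hw₀ _)) zero_le_four
    _ ≤ 4 * ∑ p ∈ n.primesLE \ (n / 2).primesLE, w p * Real.log p := by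
        rw [mul_sum]
        refine mul_le_mul_of_nonneg_left (sum_le_sum fun p hp ↦ mul_le_mul_of_nonneg_right
          (hw (half_le p hp)) (Real.log_natCast_nonneg p)) zero_le_four
    _ ≤ 4 * ∑ p ∈ n.primesLE, w p * Real.log p :=
        mul_le_mul_of_nonneg_left (sum_le_sum_of_subset_of_nonneg sdiff_subset
          fun p _ _ ↦ term_nonneg p) zero_le_four

theorem HasPrimeMean.tendsto_weighted {f w : ℕ → ℝ} {A : ℝ} (hf : HasPrimeMean f A)
    (hw₀ : ∀ n, 0 ≤ w n) (hw : Monotone w) (hw_pos : ∀ᶠ n in atTop, 0 < w n)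
    (doubling : w =O[atTop] fun n ↦ w (n / 2)) :
    Tendsto (fun n : ℕ ↦ (∑ p ∈ n.primesLE, f p * (w p * Real.log p)) /
      ∑ p ∈ n.primesLE, w p * Real.log p) atTop (𝓝 A) := by
  have centered : Tendsto (fun n : ℕ ↦ (∑ p ∈ n.primesLE, (f p - A) * Real.log p) / n) atTop
      (𝓝 0) := by
    have := hf.sub (HasPrimeMean.one.const_mul A)
    rw [mul_one, sub_self] at this
    refine this.congr fun n ↦ ?_
    simp_rw [Pi.one_apply, one_mul, sub_mul, sum_sub_distrib, ← mul_sum, sub_div, mul_div_assoc]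
  have partial_sums : (fun n ↦ ∑ p ∈ range (n + 1),
      if p.Prime then (f p - A) * Real.log p else 0) =o[atTop] fun n ↦ (n : ℝ) := by
    simp_rw [← sum_filter, ← Nat.primesLE_eq_filter_range]
    refine (isLittleO_iff_tendsto' ?_).2 centered
    filter_upwards [eventually_ne_atTop 0] with n hn hn₀
    exact absurd (Nat.cast_eq_zero.1 hn₀) hn
  have main := isBigO_sum_primesLE_mul_log hw₀ hw doubling
  have error := (isLittleO_sum_range_succ_mul hw₀ hw partial_sums).trans_isBigO main
  have denom_ne_zero : ∀ᶠ n : ℕ in atTop, ∑ p ∈ n.primesLE, w p * Real.log p ≠ 0 := by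
    filter_upwards [main.eq_zero_imp, hw_pos, eventually_gt_atTop 0] with n hn hwn hn₀ h₀
    exact (mul_pos (Nat.cast_pos.2 hn₀) hwn).ne' (hn h₀)
  refine (by simpa using error.tendsto_div_nhds_zero.add_const A : Tendsto _ _ _).congr' ?_
  filter_upwards [denom_ne_zero] with n hn
  rw [div_add' _ _ _ hn, Nat.primesLE_eq_filter_range, sum_filter, sum_filter, mul_sum,
    ← sum_add_distrib]
  congr 1
  refine sum_congr rfl fun p _ ↦ ?_
  split_ifs <;> ring

end

section

open Asymptotics Finset

lemma sub_one_div_log_nonneg {x : ℝ} (hx : 0 ≤ x) : 0 ≤ (x - 1) / Real.log x := by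
  rcases le_total x 1 with h | h
  · exact div_nonneg_of_nonpos (sub_nonpos.2 h) (Real.log_nonpos hx h)
  · exact div_nonneg (sub_nonneg.2 h) (Real.log_nonneg h)

lemma monotone_natCast_sub_one_div_log : Monotone fun n : ℕ ↦ ((n : ℝ) - 1) / Real.log n := by
  intro m n hmn
  rcases le_or_gt m 1 with hm | hm
  · have : ((m : ℝ) - 1) / Real.log m = 0 := by interval_cases m <;> simp
    exact this.trans_le (sub_one_div_log_nonneg n.cast_nonneg)
  · have hm' : (1 : ℝ) < m := by exact_mod_cast hm
    have hmn' : (m : ℝ) ≤ n := by exact_mod_cast hmn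
    have slope := strictConcaveOn_log_Ioi.concaveOn.slope_anti (Set.mem_Ioi.2 one_pos)
      ⟨Set.mem_Ioi.2 (one_pos.trans hm'), hm'.ne'⟩
      ⟨Set.mem_Ioi.2 (one_pos.trans (hm'.trans_le hmn')), (hm'.trans_le hmn').ne'⟩ hmn'
    simp only [slope_def_field, Real.log_one, sub_zero] at slope
    have := inv_anti₀ (div_pos (Real.log_pos (hm'.trans_le hmn')) (by linarith)) slope
    rwa [inv_div, inv_div] at this

/-- The weight `n ^ k * (n - 1) / log n`, for which `φ(p ^ (k + 1)) = w(p) * log p` at primes `p`.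
Division by `log 0 = log 1 = 0` makes it vanish at `0` and `1`. -/
noncomputable def totientWeight (k n : ℕ) : ℝ := (n : ℝ) ^ k * ((n - 1) / Real.log n)

namespace totientWeight

lemma nonneg (k n : ℕ) : 0 ≤ totientWeight k n :=
  mul_nonneg (by positivity) (sub_one_div_log_nonneg n.cast_nonneg)

lemma monotone (k : ℕ) : Monotone (totientWeight k) :=
  Monotone.mul (fun m n hmn ↦ pow_le_pow_left₀ m.cast_nonneg (Nat.cast_le.2 hmn) k)
    monotone_natCast_sub_one_div_log (fun n ↦ by positivity) fun n ↦
    sub_one_div_log_nonneg n.cast_nonneg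

lemma pos {n : ℕ} (k : ℕ) (hn : 1 < n) : 0 < totientWeight k n := by
  have hn' : (1 : ℝ) < n := by exact_mod_cast hn
  exact mul_pos (by positivity) (div_pos (sub_pos.2 hn') (Real.log_pos hn'))

lemma isBigO_div_two (k : ℕ) :
    totientWeight k =O[atTop] fun n ↦ totientWeight k (n / 2) := by
  refine .of_bound (3 ^ k * 4) ?_
  filter_upwards [eventually_ge_atTop 4] with n hn
  rw [Real.norm_of_nonneg (nonneg k n), Real.norm_of_nonneg (nonneg k (n / 2))]
  have two_le : (2 : ℝ) ≤ (n / 2 : ℕ) := by exact_mod_cast (by lia : 2 ≤ n / 2)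
  have half_le : ((n / 2 : ℕ) : ℝ) ≤ n := by exact_mod_cast (by lia : n / 2 ≤ n)
  have le_double : (n : ℝ) ≤ 2 * (n / 2 : ℕ) + 1 := by exact_mod_cast (by lia : n ≤ 2 * (n / 2) + 1)
  have log_pos : 0 < Real.log (n / 2 : ℕ) := Real.log_pos (by linarith)
  have log_le : Real.log (n / 2 : ℕ) ≤ Real.log n := Real.log_le_log (by linarith) half_le
  calc (n : ℝ) ^ k * ((n - 1) / Real.log n)
      ≤ (3 * (n / 2 : ℕ)) ^ k * (4 * ((n / 2 : ℕ) - 1) / Real.log (n / 2 : ℕ)) :=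
        mul_le_mul (pow_le_pow_left₀ n.cast_nonneg (by linarith) k)
          (div_le_div₀ (by linarith) (by linarith) log_pos log_le)
          (sub_one_div_log_nonneg n.cast_nonneg) (by positivity)
    _ = 3 ^ k * 4 * totientWeight k (n / 2) := by
        rw [totientWeight, mul_pow, mul_div_assoc]
        ring

lemma mul_log_eq_totient {p : ℕ} (hp : p.Prime) (k : ℕ) :
    totientWeight k p * Real.log p = (p ^ (k + 1)).totient := by
  have log_ne_zero : Real.log p ≠ 0 := (Real.log_pos (by exact_mod_cast hp.one_lt)).ne'
  rw [totientWeight, mul_assoc, div_mul_cancel₀ _ log_ne_zero, Nat.totient_prime_pow_succ hp]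
  push_cast [hp.one_le]
  rfl

end totientWeight

lemma tendsto_sum_totient_totient_div_sum_totient (k : ℕ) :
    Tendsto (fun n : ℕ ↦ (∑ p ∈ n.primesLE, ((p ^ (k + 1)).totient.totient : ℝ)) /
      ∑ p ∈ n.primesLE, ((p ^ (k + 1)).totient : ℝ)) atTop (nhds artinConstant) := by
  refine ((hasPrimeMean_totient_totient_div_totient k).tendsto_weighted (totientWeight.nonneg k)
    (totientWeight.monotone k) ((eventually_gt_atTop 1).mono fun n ↦ totientWeight.pos k)
    (totientWeight.isBigO_div_two k)).congr fun n ↦ ?_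
  refine congrArg₂ _ (sum_congr rfl fun p hp ↦ ?_) (sum_congr rfl fun p hp ↦ ?_)
  · have hp := Nat.prime_of_mem_primesLE hp
    have : 0 < (p ^ (k + 1)).totient := Nat.totient_pos.2 (pow_pos hp.pos _)
    rw [totientWeight.mul_log_eq_totient hp, div_mul_cancel₀ _ (Nat.cast_ne_zero.2 this.ne')]
  · exact totientWeight.mul_log_eq_totient (Nat.prime_of_mem_primesLE hp) k

lemma sum_range_nth {M : Type*} [AddCommMonoid M] {P : ℕ → Prop} [DecidablePred P]
    (hP : (Set.ofPred P).Infinite) (g : ℕ → M) (N : ℕ) :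
    ∑ i ∈ range N, g (Nat.nth P i) = ∑ n ∈ range (Nat.nth P N) with P n, g n := by
  induction N with
  | zero =>
    have : {n ∈ range (Nat.nth P 0) | P n} = ∅ := filter_eq_empty_iff.2 fun n hn hPn ↦ by
      rw [mem_range, Nat.nth_zero] at hn
      exact Nat.notMem_of_lt_sInf hn hPn
    rw [this, sum_range_zero, sum_empty]
  | succ N ih =>
    rw [sum_range_succ, ih, Nat.filter_range_nth_eq_insert_of_infinite hP, sum_insert (by simp),
      add_comm]

lemma sum_range_nth_prime {M : Type*} [AddCommMonoid M] (g : ℕ → M) (N : ℕ) :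
    ∑ i ∈ range N, g (Nat.nth Nat.Prime i) = ∑ p ∈ (Nat.nth Nat.Prime N - 1).primesLE, g p := by
  rw [sum_range_nth Nat.infinite_setOfPred_prime, ← Nat.primesBelow_eq_primesLE_sub_one]
  rfl

lemma tendsto_nth_prime_sub_one : Tendsto (fun N ↦ Nat.nth Nat.Prime N - 1) atTop atTop :=
  (tendsto_sub_atTop_nat 1).comp (Nat.nth_strictMono Nat.infinite_setOfPred_prime).tendsto_atTop

end

/-- For every `k ≥ 0`, the ratio `(∑_{i=1}^N φ(φ(p_i^{k+1}))) / (∑_{i=1}^N φ(p_i^{k+1}))`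
over the first `N` primes tends to Artin's constant. -/
theorem artin_ratio_formula_prime_powers (k : ℕ) :
    Tendsto (fun N : ℕ =>
        (∑ i ∈ Finset.range N, (((Nat.nth Nat.Prime i ^ (k + 1)).totient).totient : ℝ)) /
        (∑ i ∈ Finset.range N, ((Nat.nth Nat.Prime i ^ (k + 1)).totient : ℝ)))
      atTop (nhds artinConstant) := by
  refine ((tendsto_sum_totient_totient_div_sum_totient k).comp tendsto_nth_prime_sub_one).congr
    fun N ↦ ?_
  rw [Function.comp_apply, ← sum_range_nth_prime fun p ↦ ((p ^ (k + 1)).totient.totient : ℝ),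
    ← sum_range_nth_prime fun p ↦ ((p ^ (k + 1)).totient : ℝ)]
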